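/- Let $\mu>0$ and $\delta>0$ be real constants, set $t_o:=\frac{2\delta}{\sqrt{4\delta^2+\mu^2}}$, $t_1:=\frac{\sqrt{2}\,\delta}{\sqrt{\mu^2+6\delta^2}}$, $\widetilde{D}:=\{(s,t)\in\mathbb{R}^2:0\le t\le t_o,\ |s|\le t\}$, and define $\widetilde{R}(s,t):=\dfrac{(1-t^2)^2\big[2(\mu^2+4\delta^2)(1-5s^2)t^2+3\mu^2s^4+4(\mu^2+10\delta^2)s^2+\mu^2-8\delta^2\big]}{\mu(1+s^2)^4}$. Then $\min_{(s,t)\in\widetilde{D}}\widetilde{R}(s,t)=\dfrac{\mu^2-8\delta^2}{\mu}=\widetilde{R}(0,0)$ and $\max_{(s,t)\in\widetilde{D}}\widetilde{R}(s,t)=\dfrac{(\mu^2+4\delta^2)^4}{\mu(\mu^2+8\delta^2)^3}=\widetilde{R}(\pm t_1,t_1)$. -/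

import Mathlib

/-- The two-variable flag-curvature function (formula (47) of the paper) of `F₀⁺`. -/
noncomputable def Rplus (μ δ s t : ℝ) : ℝ :=
  ((1 - t ^ 2) ^ 2 *
      (2 * (μ ^ 2 + 4 * δ ^ 2) * (1 - 5 * s ^ 2) * t ^ 2 + 3 * μ ^ 2 * s ^ 4
        + 4 * (μ ^ 2 + 10 * δ ^ 2) * s ^ 2 + μ ^ 2 - 8 * δ ^ 2)) /
    (μ * (1 + s ^ 2) ^ 4)

/-!
In the variables `x = s²`, `u = 1 - t²`, `p = μ²`, `k = μ² + 4δ²`, the function `μ R̃` is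
`u² (3p(1 - x)² - 2ku(1 - 5x)) / (1 + x)⁴`, and `D̃` becomes `p ≤ ku`, `0 ≤ x ≤ 1 - u`.

Minimum: once the bound is multiplied out, the difference of its two sides is affine and monotone
in `p`, so it suffices to treat the edge `p = ku` (that is, `t = t_o`), where `k` cancels and a
polynomial inequality in `x` and `u` remains.

Maximum: put `u = c² (1 - x)` with `0 ≤ c ≤ 1`, so that `c = 1` is the edge `|s| = t`. A cubic
inequality in `c`, sharp at `c = 1`, followed by AM-GM with weights `3 : 1` for `(2k - p) c (1 - x)`
and `k (1 + x)`, gives the bound; equality in AM-GM at `c = 1` is `x = t₁²`.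
-/

section PolynomialInequalities

variable {R : Type*} [CommRing R] [LinearOrder R] [IsStrictOrderedRing R]

lemma four_mul_pow_three_mul_le (a b : R) : 4 * (a ^ 3 * b) ≤ 3 * a ^ 4 + b ^ 4 := by
  have : 0 ≤ (b - a) ^ 2 * ((b + a) ^ 2 + 2 * a ^ 2) := by positivity
  linarith

lemma mul_three_mul_sub_sq_mul_le {c x : R} (hc₀ : 0 ≤ c) (hc₁ : c ≤ 1) (hx : 0 ≤ x) :
    c * (3 * (1 - x) - c ^ 2 * (1 - 5 * x)) ≤ 2 * (1 + x) := by
  have : 0 ≤ 1 - c := sub_nonneg.2 hc₁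
  have : 0 ≤ (1 - c) ^ 2 * (c + 2) + x * ((1 - c) * (5 * c ^ 2 + 5 * c + 2)) := by positivity
  linarith

lemma three_mul_sub_two_mul_one_add_pow_three_le {u x : R} (hu : 0 ≤ u) (hx : 0 ≤ x)
    (hux : u ≤ 1 - x) : (3 * u - 2) * (1 + x) ^ 3 ≤ u ^ 3 * (1 + 3 * x) := by
  have hxu : x ≤ 1 - u := by linarith
  have hsq : 0 ≤ (1 - u) ^ 2 - x ^ 2 := sub_nonneg.2 (pow_le_pow_left₀ hx hxu 2)
  have hsub : 0 ≤ 1 - u := hx.trans hxu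
  have : 0 ≤ ((1 - u) ^ 2 - x ^ 2) * (2 + u) * (1 + 3 * x) + 8 * x ^ 2 * (x + (1 - u)) := by
    positivity
  linarith

end PolynomialInequalities

/-- The numerator of `R̃` over the denominator `μ (1 + x)⁴`, in the variables `p = μ²`,
`k = μ² + 4δ²`, `x = s²`, `u = 1 - t²` that make it polynomial of low degree. -/
def curvatureNumerator (p k x u : ℝ) : ℝ :=
  u ^ 2 * (3 * p * (1 - x) ^ 2 - 2 * k * u * (1 - 5 * x))

lemma le_curvatureNumerator {p k x u : ℝ} (hk : 0 ≤ k) (hpk : p ≤ k * u) (hu : 0 ≤ u)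
    (hx : 0 ≤ x) (hux : u ≤ 1 - x) :
    (3 * p - 2 * k) * (1 + x) ^ 4 ≤ curvatureNumerator p k x u := by
  have slope : (u * (1 - x)) ^ 2 ≤ (1 + x) ^ 4 :=
    calc (u * (1 - x)) ^ 2 ≤ 1 :=
          pow_le_one₀ (mul_nonneg hu (hu.trans hux))
            (mul_le_one₀ (by linarith) (hu.trans hux) (by linarith))
      _ ≤ (1 + x) ^ 4 := one_le_pow₀ (by linarith)
  have edge : (3 * (k * u) - 2 * k) * (1 + x) ^ 4 ≤ curvatureNumerator (k * u) k x u :=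
    calc (3 * (k * u) - 2 * k) * (1 + x) ^ 4
        = k * (1 + x) * ((3 * u - 2) * (1 + x) ^ 3) := by ring
      _ ≤ k * (1 + x) * (u ^ 3 * (1 + 3 * x)) :=
          mul_le_mul_of_nonneg_left (three_mul_sub_two_mul_one_add_pow_three_le hu hx hux)
            (by positivity)
      _ = curvatureNumerator (k * u) k x u := by
          rw [curvatureNumerator]
          ring
  have descent := mul_le_mul_of_nonneg_left slope (sub_nonneg.2 hpk)
  unfold curvatureNumerator at edge ⊢
  linarith

lemma exists_eq_sq_mul_of_le {u v : ℝ} (hu : 0 ≤ u) (huv : u ≤ v) :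
    ∃ c : ℝ, 0 ≤ c ∧ c ≤ 1 ∧ u = c ^ 2 * v := by
  have hv : 0 ≤ v := hu.trans huv
  refine ⟨√(u / v), Real.sqrt_nonneg _, Real.sqrt_le_one.2 (div_le_one_of_le₀ huv hv), ?_⟩
  rw [Real.sq_sqrt (div_nonneg hu hv), div_mul_cancel_of_imp]
  rintro rfl
  exact le_antisymm huv hu

lemma mul_curvatureNumerator_le {p k x u : ℝ} (hk : 0 ≤ k) (hpk : p ≤ 2 * k) (hu : 0 ≤ u)
    (hx : 0 ≤ x) (hux : u ≤ 1 - x) :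
    (2 * k - p) ^ 3 * curvatureNumerator p k x u ≤ k ^ 4 * (1 + x) ^ 4 := by
  obtain ⟨c, hc₀, hc₁, rfl⟩ := exists_eq_sq_mul_of_le hu hux
  set a := (2 * k - p) * c * (1 - x) with ha_def
  have ha : 0 ≤ a := mul_nonneg (mul_nonneg (sub_nonneg.2 hpk) hc₀) (hu.trans hux)
  calc (2 * k - p) ^ 3 * curvatureNumerator p k x (c ^ 2 * (1 - x))
      = 2 * k * a ^ 3 * (c * (3 * (1 - x) - c ^ 2 * (1 - 5 * x))) - 3 * a ^ 4 := by
        rw [curvatureNumerator, ha_def]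
        ring
    _ ≤ 2 * k * a ^ 3 * (2 * (1 + x)) - 3 * a ^ 4 :=
        sub_le_sub_right
          (mul_le_mul_of_nonneg_left (mul_three_mul_sub_sq_mul_le hc₀ hc₁ hx) (by positivity)) _
    _ ≤ (k * (1 + x)) ^ 4 := by linarith [four_mul_pow_three_mul_le a (k * (1 + x))]
    _ = k ^ 4 * (1 + x) ^ 4 := mul_pow _ _ _

lemma Rplus_eq_curvatureNumerator_div (μ δ s t : ℝ) :
    Rplus μ δ s t =
      curvatureNumerator (μ ^ 2) (μ ^ 2 + 4 * δ ^ 2) (s ^ 2) (1 - t ^ 2)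
        / (μ * (1 + s ^ 2) ^ 4) := by
  rw [Rplus, curvatureNumerator]
  ring

lemma Rplus_zero_zero (μ δ : ℝ) : Rplus μ δ 0 0 = (μ ^ 2 - 8 * δ ^ 2) / μ := by
  simp [Rplus]

lemma le_Rplus {μ δ s t : ℝ} (hμ : 0 < μ) (hst : s ^ 2 ≤ t ^ 2)
    (ht : t ^ 2 * (4 * δ ^ 2 + μ ^ 2) ≤ 4 * δ ^ 2) :
    (μ ^ 2 - 8 * δ ^ 2) / μ ≤ Rplus μ δ s t := by
  have hpk : μ ^ 2 ≤ (μ ^ 2 + 4 * δ ^ 2) * (1 - t ^ 2) := by linarith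
  have hu : 0 ≤ 1 - t ^ 2 :=
    nonneg_of_mul_nonneg_right ((sq_nonneg μ).trans hpk) (by positivity)
  rw [Rplus_eq_curvatureNumerator_div, div_le_div_iff₀ hμ (by positivity)]
  have := mul_le_mul_of_nonneg_left
    (le_curvatureNumerator (by positivity) hpk hu (sq_nonneg s) (sub_le_sub_left hst 1)) hμ.le
  linarith

lemma Rplus_le {μ s t : ℝ} (δ : ℝ) (hμ : 0 < μ) (hst : s ^ 2 ≤ t ^ 2) (ht : t ^ 2 ≤ 1) :
    Rplus μ δ s t ≤ (μ ^ 2 + 4 * δ ^ 2) ^ 4 / (μ * (μ ^ 2 + 8 * δ ^ 2) ^ 3) := by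
  have hpk : μ ^ 2 ≤ 2 * (μ ^ 2 + 4 * δ ^ 2) := by linarith [sq_nonneg μ, sq_nonneg δ]
  have hB : 2 * (μ ^ 2 + 4 * δ ^ 2) - μ ^ 2 = μ ^ 2 + 8 * δ ^ 2 := by ring
  have bound := mul_curvatureNumerator_le (by positivity) hpk (sub_nonneg.2 ht) (sq_nonneg s)
    (sub_le_sub_left hst 1)
  rw [hB] at bound
  rw [Rplus_eq_curvatureNumerator_div, div_le_div_iff₀ (by positivity) (by positivity)]
  linarith [mul_le_mul_of_nonneg_left bound hμ.le]

lemma Rplus_eq_of_sq_eq {μ δ s t : ℝ} (hμ : μ ≠ 0)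
    (hs : s ^ 2 = 2 * δ ^ 2 / (μ ^ 2 + 6 * δ ^ 2)) (ht : t ^ 2 = 2 * δ ^ 2 / (μ ^ 2 + 6 * δ ^ 2)) :
    Rplus μ δ s t = (μ ^ 2 + 4 * δ ^ 2) ^ 4 / (μ * (μ ^ 2 + 8 * δ ^ 2) ^ 3) := by
  have one_sub : 1 - 2 * δ ^ 2 / (μ ^ 2 + 6 * δ ^ 2)
      = (μ ^ 2 + 4 * δ ^ 2) / (μ ^ 2 + 6 * δ ^ 2) := by
    field_simp
    ring
  have one_add : 1 + 2 * δ ^ 2 / (μ ^ 2 + 6 * δ ^ 2)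
      = (μ ^ 2 + 8 * δ ^ 2) / (μ ^ 2 + 6 * δ ^ 2) := by
    field_simp
    ring
  rw [Rplus_eq_curvatureNumerator_div, curvatureNumerator, hs, ht, one_sub, one_add]
  field_simp
  ring

lemma le_div_sqrt_iff {a b t : ℝ} (ha : 0 ≤ a) (hb : 0 < b) (ht : 0 ≤ t) :
    t ≤ a / √b ↔ t ^ 2 * b ≤ a ^ 2 := by
  rw [le_div_iff₀ (Real.sqrt_pos.2 hb), ← sq_le_sq₀ (by positivity) ha, mul_pow,
    Real.sq_sqrt hb.le]

lemma Rplus_mem_Icc {μ δ s t : ℝ} (hμ : 0 < μ) (hδ : 0 ≤ δ) (hst : |s| ≤ t)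
    (hto : t ≤ 2 * δ / √(4 * δ ^ 2 + μ ^ 2)) :
    Rplus μ δ s t ∈ Set.Icc ((μ ^ 2 - 8 * δ ^ 2) / μ)
      ((μ ^ 2 + 4 * δ ^ 2) ^ 4 / (μ * (μ ^ 2 + 8 * δ ^ 2) ^ 3)) := by
  have hst_sq : s ^ 2 ≤ t ^ 2 := sq_le_sq.2 (hst.trans (le_abs_self t))
  have ht_sq : t ^ 2 * (4 * δ ^ 2 + μ ^ 2) ≤ (2 * δ) ^ 2 :=
    (le_div_sqrt_iff (by positivity) (by positivity) ((abs_nonneg s).trans hst)).1 hto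
  have ht_one : t ^ 2 ≤ 1 :=
    le_of_mul_le_mul_right (by linarith [sq_nonneg μ]) (show 0 < 4 * δ ^ 2 + μ ^ 2 by positivity)
  exact ⟨le_Rplus hμ hst_sq (by linarith), Rplus_le δ hμ hst_sq ht_one⟩

lemma sq_sqrt_two_mul_div_sqrt (μ δ : ℝ) :
    (√2 * δ / √(μ ^ 2 + 6 * δ ^ 2)) ^ 2 = 2 * δ ^ 2 / (μ ^ 2 + 6 * δ ^ 2) := by
  rw [div_pow, mul_pow, Real.sq_sqrt zero_le_two, Real.sq_sqrt (by positivity)]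

lemma sqrt_two_mul_div_sqrt_le {μ δ : ℝ} (hμ : μ ≠ 0) (hδ : 0 ≤ δ) :
    √2 * δ / √(μ ^ 2 + 6 * δ ^ 2) ≤ 2 * δ / √(4 * δ ^ 2 + μ ^ 2) := by
  rw [le_div_sqrt_iff (by positivity) (by positivity) (by positivity), sq_sqrt_two_mul_div_sqrt,
    div_mul_eq_mul_div, div_le_iff₀ (by positivity)]
  have : 0 ≤ δ ^ 2 * (2 * μ ^ 2 + 16 * δ ^ 2) := by positivity
  linarith

/-- on `D̃ = {0 ≤ t ≤ t_o, |s| ≤ t}` with `t_o = 2δ/√(4δ²+μ²)`,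
the min of `R̃` is `(μ²-8δ²)/μ = R̃(0,0)` and the max is
`(μ²+4δ²)⁴/(μ(μ²+8δ²)³) = R̃(±t₁,t₁)` with `t₁ = √2δ/√(μ²+6δ²)`
(formula (14) of Theorem 1.3(iii)). -/
theorem stmt_15 (μ δ : ℝ) (hμ : 0 < μ) (hδ : 0 < δ) :
    IsLeast
      ((fun p : ℝ × ℝ => Rplus μ δ p.1 p.2) ''
        {p : ℝ × ℝ | 0 ≤ p.2 ∧ p.2 ≤ 2 * δ / Real.sqrt (4 * δ ^ 2 + μ ^ 2) ∧
          |p.1| ≤ p.2})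
      ((μ ^ 2 - 8 * δ ^ 2) / μ) ∧
    (μ ^ 2 - 8 * δ ^ 2) / μ = Rplus μ δ 0 0 ∧
    IsGreatest
      ((fun p : ℝ × ℝ => Rplus μ δ p.1 p.2) ''
        {p : ℝ × ℝ | 0 ≤ p.2 ∧ p.2 ≤ 2 * δ / Real.sqrt (4 * δ ^ 2 + μ ^ 2) ∧
          |p.1| ≤ p.2})
      ((μ ^ 2 + 4 * δ ^ 2) ^ 4 / (μ * (μ ^ 2 + 8 * δ ^ 2) ^ 3)) ∧
    (μ ^ 2 + 4 * δ ^ 2) ^ 4 / (μ * (μ ^ 2 + 8 * δ ^ 2) ^ 3)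
      = Rplus μ δ (Real.sqrt 2 * δ / Real.sqrt (μ ^ 2 + 6 * δ ^ 2))
          (Real.sqrt 2 * δ / Real.sqrt (μ ^ 2 + 6 * δ ^ 2)) ∧
    (μ ^ 2 + 4 * δ ^ 2) ^ 4 / (μ * (μ ^ 2 + 8 * δ ^ 2) ^ 3)
      = Rplus μ δ (-(Real.sqrt 2 * δ / Real.sqrt (μ ^ 2 + 6 * δ ^ 2)))
          (Real.sqrt 2 * δ / Real.sqrt (μ ^ 2 + 6 * δ ^ 2)) := by
  have ht₁ := sq_sqrt_two_mul_div_sqrt μ δ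
  have hmax := Rplus_eq_of_sq_eq hμ.ne' ht₁ ht₁
  refine ⟨⟨⟨(0, 0), ⟨le_rfl, by positivity, by simp⟩, Rplus_zero_zero μ δ⟩, ?_⟩,
    (Rplus_zero_zero μ δ).symm,
    ⟨⟨(_, _), ⟨by positivity, sqrt_two_mul_div_sqrt_le hμ.ne' hδ.le,
      (abs_of_nonneg (by positivity)).le⟩, hmax⟩, ?_⟩,
    hmax.symm, (Rplus_eq_of_sq_eq hμ.ne' ((neg_sq _).trans ht₁) ht₁).symm⟩
  · rintro _ ⟨_, ⟨-, hto, hst⟩, rfl⟩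
    exact (Rplus_mem_Icc hμ hδ.le hst hto).1
  · rintro _ ⟨_, ⟨-, hto, hst⟩, rfl⟩
    exact (Rplus_mem_Icc hμ hδ.le hst hto).2
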